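/- arXiv:2002.08824 — 2 statements merged into one kernel-verified Lean document; each statement's English description precedes it below -/
import Mathlib

section
/- Let M be a matroid of rank n−k on a ground set E of cardinality n, and let S = (σ_1 ⊊ ⋯ ⊊ σ_k) ∈ Σ be a chain with e(S) = (e_1,…,e_k), the bottom-up greedy weights of M. Let ∅ ⊊ ρ_1 ⊊ ρ_2 ⊊ ⋯ ⊊ ρ_n = E be any maximal chain of subsets of E (so |ρ_i| = i) that contains E∖σ_i for every 1 ≤ i ≤ k, and let τ_1 ⊊ ⋯ ⊊ τ_{n−k} be the chain obtained from (ρ_1,…,ρ_n) by removing all sets of cardinality n+1−|σ_i| for 1 ≤ i ≤ k. Then n̄(τ_j) = j for every 1 ≤ j ≤ n−k, where n̄ is the nullity function of the dual matroid M̄. -/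
open Finset

/-- A matroid on ground set `Fin n`, given by its rank function. -/
structure MatroidRk (n : ℕ) where
  r : Finset (Fin n) → ℕ
  r_le_card : ∀ X, r X ≤ X.card
  r_mono : ∀ ⦃X Y : Finset (Fin n)⦄, X ⊆ Y → r X ≤ r Y
  r_submod : ∀ X Y, r (X ∩ Y) + r (X ∪ Y) ≤ r X + r Y

namespace MatroidRk

variable {n : ℕ}

/-- The nullity function `n(X) = |X| - r(X)`. -/
def nul (M : MatroidRk n) (X : Finset (Fin n)) : ℕ := X.card - M.r X

/-- `X ∈ N_i`: `X` is inclusion-minimal among the subsets of nullity `i`. -/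
def Nmin (M : MatroidRk n) (i : ℕ) (X : Finset (Fin n)) : Prop :=
  M.nul X = i ∧ ∀ Y ⊆ X, M.nul Y = i → Y = X

/-- Membership in `Σ`: a chain `σ₁ ⊊ ⋯ ⊊ σ_k` with `σ_i ∈ 𝒩_i`. -/
def SigmaChain (M : MatroidRk n) (k : ℕ) (σ : Fin k → Finset (Fin n)) : Prop :=
  StrictMono σ ∧ ∀ i : Fin k, M.nul (σ i) = (i : ℕ) + 1

/-- Membership in `Σ'`: a chain `σ₁ ⊊ ⋯ ⊊ σ_k` with `σ_i ∈ N_i`. -/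
def SigmaChain' (M : MatroidRk n) (k : ℕ) (σ : Fin k → Finset (Fin n)) : Prop :=
  StrictMono σ ∧ ∀ i : Fin k, M.Nmin ((i : ℕ) + 1) (σ i)

/-- The set `{e(S) : S ∈ Σ}` of tuples of cardinalities of chains in `Σ`. -/
def eSet (M : MatroidRk n) (k : ℕ) : Set (Fin k → ℕ) :=
  {u | ∃ σ : Fin k → Finset (Fin n), M.SigmaChain k σ ∧ ∀ i, (σ i).card = u i}

/-- The set `{e(S) : S ∈ Σ'}`. -/
def eSet' (M : MatroidRk n) (k : ℕ) : Set (Fin k → ℕ) :=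
  {u | ∃ σ : Fin k → Finset (Fin n), M.SigmaChain' k σ ∧ ∀ i, (σ i).card = u i}

/-- The generalized Hamming weight `d_i = min {|σ| : σ ∈ 𝒩_i}`. -/
noncomputable def dW (M : MatroidRk n) (i : ℕ) : ℕ :=
  sInf {c | ∃ X, M.nul X = i ∧ X.card = c}

end MatroidRk

/-- `w` is the lexicographically smallest element of `A`. -/
def IsLexMin {k : ℕ} (A : Set (Fin k → ℕ)) (w : Fin k → ℕ) : Prop :=
  w ∈ A ∧ ∀ u ∈ A, toLex w ≤ toLex u

/-- `w` is the reverse-lexicographically smallest element of `A`. -/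
def IsRevLexMin {k : ℕ} (A : Set (Fin k → ℕ)) (w : Fin k → ℕ) : Prop :=
  w ∈ A ∧ ∀ u ∈ A, toLex (w ∘ Fin.rev) ≤ toLex (u ∘ Fin.rev)

namespace MatroidRk

/-- The rank function of the dual matroid: `r̄(X) = |X| + r(E∖X) - r(E)`. -/
def rDual {n : ℕ} (M : MatroidRk n) (X : Finset (Fin n)) : ℕ :=
  X.card + M.r Xᶜ - M.r Finset.univ

/-- The nullity function of the dual matroid: `n̄(X) = |X| - r̄(X)`. -/
def nulDual {n : ℕ} (M : MatroidRk n) (X : Finset (Fin n)) : ℕ :=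
  X.card - M.rDual X

end MatroidRk

/-! Complementation turns the dual nullity along `ρ` into the nullity along the descending chain
`m ↦ (ρ m)ᶜ`: each step raises `n̄ (ρ m)` by one minus the drop of the nullity. Lexicographic
minimality forces the nullity to drop at each step that starts from some `σ i`, so `n̄` stays
constant at the `k` omitted cardinalities `n + 1 - |σ i|`. Only `n - k` steps remain, and since `n̄`
climbs from `0` to `n - k` it must rise by one at each of them.
-/

namespace MatroidRk

variable {n k : ℕ} (M : MatroidRk n)

theorem nul_add_r (X : Finset (Fin n)) : M.nul X + M.r X = #X :=
  Nat.sub_add_cancel (M.r_le_card X)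

theorem r_le_r_add_card_sdiff (X Y : Finset (Fin n)) : M.r Y ≤ M.r X + #(Y \ X) :=
  calc
    M.r Y ≤ M.r (X ∪ Y \ X) := M.r_mono (by simp)
    _ ≤ M.r X + M.r (Y \ X) := le_of_add_le_right (M.r_submod X (Y \ X))
    _ ≤ M.r X + #(Y \ X) := by gcongr; exact M.r_le_card _

theorem nul_mono : Monotone M.nul := fun X Y hXY => by
  have hrank := M.r_le_r_add_card_sdiff X Y
  have hcard := card_sdiff_add_card_eq_card hXY
  have hX := M.nul_add_r X
  have hY := M.nul_add_r Y
  lia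

theorem nulDual_add_card (X : Finset (Fin n)) :
    M.nulDual X + n = M.nul Xᶜ + (M.r univ + #X) := by
  have hcard : #X + #Xᶜ = n := by simp [card_add_card_compl]
  have hnul := M.nul_add_r Xᶜ
  have hmono := M.r_mono (subset_univ Xᶜ)
  have hrank : M.r univ ≤ M.r Xᶜ + #X := by
    simpa [sdiff_compl] using M.r_le_r_add_card_sdiff Xᶜ univ
  simp only [nulDual, rDual]
  lia

theorem nulDual_empty : M.nulDual ∅ = 0 := by
  simp [nulDual]

theorem nulDual_univ : M.nulDual univ = M.r univ := by
  have h := M.nulDual_add_card univ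
  simp only [compl_univ, card_univ, Fintype.card_fin, nul, card_empty, Nat.zero_sub] at h
  lia

theorem nulDual_le_add_one {X Y : Finset (Fin n)} (hXY : X ⊆ Y) (hcard : #Y = #X + 1) :
    M.nulDual Y ≤ M.nulDual X + 1 := by
  have hmono := M.nul_mono (compl_subset_compl.2 hXY)
  have hX := M.nulDual_add_card X
  have hY := M.nulDual_add_card Y
  lia

theorem nulDual_le_of_nul_compl_lt {X Y : Finset (Fin n)} (hcard : #Y = #X + 1)
    (hnul : M.nul Yᶜ < M.nul Xᶜ) : M.nulDual Y ≤ M.nulDual X := by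
  have hX := M.nulDual_add_card X
  have hY := M.nulDual_add_card Y
  lia

/-- A chain is reduced if replacing a member by a proper subset that still contains all earlier
members always lowers the nullity: the local counterpart of lexicographic minimality. Being a
chain is not part of the definition. -/
def IsReduced (σ : Fin k → Finset (Fin n)) : Prop :=
  ∀ i, ∀ Y ⊂ σ i, (∀ j < i, σ j ⊆ Y) → M.nul Y < M.nul (σ i)

variable {M} {σ : Fin k → Finset (Fin n)}

theorem SigmaChain.update (hσ : M.SigmaChain k σ) {i : Fin k} {Y : Finset (Fin n)}
    (hYσ : Y ⊆ σ i) (hσY : ∀ j < i, σ j ⊆ Y) (hnul : M.nul Y = i + 1) :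
    M.SigmaChain k (Function.update σ i Y) := by
  have hmono : Monotone (Function.update σ i Y) := by
    intro p q hpq
    by_cases hp : p = i <;> by_cases hq : q = i
    · rw [hp, hq]
    · simpa [hp, hq] using hYσ.trans (hσ.1.monotone (hp ▸ hpq))
    · simpa [hp, hq] using hσY p (hq ▸ hpq.lt_of_ne (hq ▸ hp))
    · simpa [hp, hq] using hσ.1.monotone hpq
  have hnul_update (p : Fin k) : M.nul (Function.update σ i Y p) = p + 1 := by
    rcases eq_or_ne p i with rfl | hp
    · simpa using hnul
    · simpa [hp] using hσ.2 p
  refine ⟨hmono.strictMono_of_injective fun p q hpq => ?_, hnul_update⟩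
  have hnul_eq := congrArg M.nul hpq
  rw [hnul_update, hnul_update] at hnul_eq
  lia

theorem SigmaChain.isReduced (hσ : M.SigmaChain k σ)
    (hmin : IsLexMin (M.eSet k) fun i => #(σ i)) : M.IsReduced σ := by
  intro i Y hYσ hσY
  by_contra! hle
  have hnul : M.nul Y = i + 1 := (hle.antisymm' (M.nul_mono hYσ.subset)).trans (hσ.2 i)
  have hmem : Function.update (fun j => #(σ j)) i #Y ∈ M.eSet k :=
    ⟨_, hσ.update hYσ.subset hσY hnul, Function.apply_update (fun _ => card) σ i Y⟩
  exact (hmin.2 _ hmem).not_gt (Pi.toLex_update_lt_self_iff.2 (card_lt_card hYσ))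

theorem IsReduced.nul_compl_succ_lt (hred : M.IsReduced σ) (hσ : StrictMono σ)
    {ρ : Fin (n + 1) → Finset (Fin n)} (hρ : StrictMono ρ)
    (hcompl : ∀ i, ∃ m, ρ m = (σ i)ᶜ) {i : Fin k} {m : Fin n} (hm : ρ m.castSucc = (σ i)ᶜ) :
    M.nul (ρ m.succ)ᶜ < M.nul (ρ m.castSucc)ᶜ := by
  rw [hm, compl_compl]
  refine hred i _ ?_ fun j hj => ?_
  · rw [← compl_ssubset_compl, compl_compl, ← hm]
    exact hρ Fin.castSucc_lt_succ
  · obtain ⟨b, hb⟩ := hcompl j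
    have hlt : ρ m.castSucc < ρ b := by
      rw [hm, hb]
      exact compl_ssubset_compl.2 (hσ hj)
    rw [← compl_subset_compl, compl_compl, ← hb]
    exact hρ.monotone (Fin.castSucc_lt_iff_succ_le.1 (hρ.lt_iff_lt.1 hlt))

end MatroidRk

theorem eq_card_filter_le_of_succ_le {α : Type*} [Fintype α] {n : ℕ} {f : Fin (n + 1) → ℕ}
    {ι : α → Fin (n + 1)} (hzero : f 0 = 0) (hlast : f (Fin.last n) = Fintype.card α)
    (hstep : ∀ m : Fin n, f m.succ ≤ f m.castSucc + 1)
    (hconst : ∀ m : Fin n, m.succ ∉ Set.range ι → f m.succ ≤ f m.castSucc) (m : Fin (n + 1)) :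
    f m = #{a | ι a ≤ m} := by
  let g (m : Fin (n + 1)) : ℕ := #{a | ι a ≤ m}
  have hg : Monotone g := fun p q hpq => card_le_card fun a => by
    simpa only [mem_filter_univ] using fun ha => ha.trans hpq
  have hg_succ (m : Fin n) (hm : m.succ ∈ Set.range ι) : g m.castSucc < g m.succ := by
    obtain ⟨a, ha⟩ := hm
    refine card_lt_card (ssubset_iff_of_subset ?_ |>.2 ⟨a, by simp [ha], by simp [ha]⟩)
    exact fun b => by
      simpa only [mem_filter_univ] using fun hb => hb.trans Fin.castSucc_lt_succ.le
  have hdiff : Monotone fun m => (g m : ℤ) - f m := by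
    refine Fin.monotone_iff_le_succ.2 fun m => ?_
    have hg_le := hg m.castSucc_lt_succ.le
    by_cases hm : m.succ ∈ Set.range ι
    · have hg_lt := hg_succ m hm
      have hf_le := hstep m
      lia
    · have hf_le := hconst m hm
      lia
  have hlower := hdiff (Fin.zero_le m)
  have hupper := hdiff (Fin.le_last m)
  have hg_last : g (Fin.last n) = Fintype.card α := by simp [g, Fin.le_last]
  change f m = g m
  lia

theorem apply_castSucc_eq_compl {n : ℕ} {ρ : Fin (n + 1) → Finset (Fin n)}
    (hρcard : ∀ m : Fin (n + 1), #(ρ m) = m) {X : Finset (Fin n)} (hX : ∃ m, ρ m = Xᶜ)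
    {m : Fin n} (hm : (m.succ : ℕ) = n + 1 - #X) : ρ m.castSucc = Xᶜ := by
  obtain ⟨b, hb⟩ := hX
  have hb_card : (b : ℕ) = n - #X := by rw [← hρcard, hb, card_compl, Fintype.card_fin]
  have hmb : m.castSucc = b := by
    ext
    simp only [Fin.val_succ, Fin.val_castSucc] at hm ⊢
    lia
  rw [hmb, hb]

theorem statement4_general {n k : ℕ} (M : MatroidRk n) (hrk : M.r univ + k = n)
    (σ : Fin k → Finset (Fin n)) (hσ : StrictMono σ) (hred : M.IsReduced σ)
    (ρ : Fin (n + 1) → Finset (Fin n)) (hρmono : StrictMono ρ)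
    (hρcard : ∀ m : Fin (n + 1), #(ρ m) = m)
    (hcompl : ∀ i : Fin k, ∃ m : Fin (n + 1), ρ m = (σ i)ᶜ)
    (ι : Fin (n - k) → Fin (n + 1)) (hιmono : StrictMono ι)
    (hrange : ∀ m : Fin (n + 1), 1 ≤ (m : ℕ) →
      (∀ i : Fin k, (m : ℕ) ≠ n + 1 - #(σ i)) → ∃ j, ι j = m)
    (j : Fin (n - k)) : M.nulDual (ρ (ι j)) = j + 1 := by
  have hcard_succ (m : Fin n) : #(ρ m.succ) = #(ρ m.castSucc) + 1 := by simp [hρcard]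
  have hzero : M.nulDual (ρ 0) = 0 := by
    rw [card_eq_zero.1 (hρcard 0), M.nulDual_empty]
  have hlast : M.nulDual (ρ (Fin.last n)) = Fintype.card (Fin (n - k)) := by
    have huniv : ρ (Fin.last n) = univ := (card_eq_iff_eq_univ _).1 (by simp [hρcard])
    rw [huniv, M.nulDual_univ, Fintype.card_fin]
    lia
  have hconst (m : Fin n) (hm : m.succ ∉ Set.range ι) :
      M.nulDual (ρ m.succ) ≤ M.nulDual (ρ m.castSucc) := by
    obtain ⟨i, hi⟩ : ∃ i, (m.succ : ℕ) = n + 1 - #(σ i) := by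
      by_contra! hne
      exact hm (hrange m.succ (by simp) hne)
    exact M.nulDual_le_of_nul_compl_lt (hcard_succ m) <|
      hred.nul_compl_succ_lt hσ hρmono hcompl (apply_castSucc_eq_compl hρcard (hcompl i) hi)
  have hcount := eq_card_filter_le_of_succ_le (f := M.nulDual ∘ ρ) hzero hlast
    (fun m => M.nulDual_le_add_one (hρmono Fin.castSucc_lt_succ).subset (hcard_succ m)) hconst (ι j)
  simpa [hιmono.le_iff_le, filter_ge_eq_Iic] using hcount

open MatroidRk in
/-- Lemma on `δ(S)`: if `S = (σ_1 ⊊ ⋯ ⊊ σ_k) ∈ Σ` computes the bottom-up greedy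
weights, `∅ = ρ_0 ⊊ ρ_1 ⊊ ⋯ ⊊ ρ_n = E` is a maximal chain (so `|ρ_j| = j`) containing all
complements `E ∖ σ_i`, and `τ_1 ⊊ ⋯ ⊊ τ_{n-k}` is obtained from it by removing all the sets of
cardinality `n + 1 - |σ_i|`, then `n̄(τ_j) = j` for all `1 ≤ j ≤ n - k`. -/
theorem statement4 {n k : ℕ} (M : MatroidRk n) (hrk : M.r Finset.univ + k = n)
    (σ : Fin k → Finset (Fin n)) (hσ : M.SigmaChain k σ)
    (hmin : IsLexMin (M.eSet k) (fun i => (σ i).card))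
    (ρ : Fin (n + 1) → Finset (Fin n)) (hρmono : StrictMono ρ)
    (hρ0 : ρ 0 = ∅) (hρlast : ρ (Fin.last n) = Finset.univ)
    (hρcard : ∀ j : Fin (n + 1), (ρ j).card = (j : ℕ))
    (hcompl : ∀ i : Fin k, ∃ j : Fin (n + 1), ρ j = (σ i)ᶜ)
    (τ : Fin (n - k) → Finset (Fin n)) (ι : Fin (n - k) → Fin (n + 1))
    (hιmono : StrictMono ι) (hι1 : ∀ j, 1 ≤ (ι j : ℕ))
    (hτ : ∀ j, τ j = ρ (ι j))
    (hrange : ∀ m : Fin (n + 1), 1 ≤ (m : ℕ) →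
      ((∃ j, ι j = m) ↔ ∀ i : Fin k, (m : ℕ) ≠ n + 1 - (σ i).card)) :
    ∀ j : Fin (n - k), M.nulDual (τ j) = (j : ℕ) + 1 := by
  intro j
  rw [hτ j]
  exact statement4_general M hrk σ hσ.1 (hσ.isReduced hmin) ρ hρmono hρcard hcompl ι hιmono
    (fun m hm => (hrange m hm).2) j
end

section
/- Let C be an [n,k] linear code over F_q and 1 ≤ i ≤ k. If D ⊆ C is a subcode that computes d_i (i.e. dim D = i and wt(D) = d_i(C)), or if D is a CEZ greedy i-subcode, then n(Supp(D)) = i, i.e. Supp(D) ∈ 𝒩_i for the matroid M_C. -/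
open Finset
open scoped Classical

noncomputable section

/-- The rank in the matroid `M_C`: `r(X)` is the rank of the column submatrix `H_X`. -/
def colRank {F : Type*} [Field F] {m n : ℕ} (H : Matrix (Fin m) (Fin n) F)
    (X : Finset (Fin n)) : ℕ :=
  Module.finrank F (Submodule.span F ((fun j i => H i j) '' (X : Set (Fin n))))

/-- The nullity function of the matroid `M_C`: `n(X) = |X| - r(X)`. -/
def nulC {F : Type*} [Field F] {m n : ℕ} (H : Matrix (Fin m) (Fin n) F)
    (X : Finset (Fin n)) : ℕ :=
  X.card - colRank H X

/-- The support of a word. -/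
def supp {F : Type*} [Field F] {n : ℕ} (c : Fin n → F) : Finset (Fin n) :=
  Finset.univ.filter (fun i => c i ≠ 0)

/-- The support of a subcode. -/
def suppD {F : Type*} [Field F] {n : ℕ} (D : Submodule F (Fin n → F)) : Finset (Fin n) :=
  Finset.univ.filter (fun i => ∃ c ∈ D, c i ≠ 0)

/-- The weight of a subcode: the cardinality of its support. -/
def wt {F : Type*} [Field F] {n : ℕ} (D : Submodule F (Fin n → F)) : ℕ := (suppD D).card

/-- The subcode `C(X) = {c ∈ C : Supp(c) ⊆ X}`. -/
def codeRestrict {F : Type*} [Field F] {n : ℕ} (C : Submodule F (Fin n → F))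
    (X : Finset (Fin n)) : Submodule F (Fin n → F) where
  carrier := {c | c ∈ C ∧ ∀ i ∉ X, c i = 0}
  add_mem' := by
    rintro a b ⟨ha, ha0⟩ ⟨hb, hb0⟩
    exact ⟨C.add_mem ha hb, fun i hi => by simp [Pi.add_apply, ha0 i hi, hb0 i hi]⟩
  zero_mem' := ⟨C.zero_mem, fun i _ => rfl⟩
  smul_mem' := by
    rintro r a ⟨ha, ha0⟩
    exact ⟨C.smul_mem r ha, fun i hi => by simp [Pi.smul_apply, ha0 i hi]⟩

/-- The code defined by the parity check matrix `H`: `C = {x : H x = 0}`. -/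
def codeOf {F : Type*} [Field F] {m n : ℕ} (H : Matrix (Fin m) (Fin n) F) :
    Submodule F (Fin n → F) :=
  LinearMap.ker H.mulVecLin

/-- The `r`-th generalized Hamming weight of a code `C`. -/
def dC {F : Type*} [Field F] {n : ℕ} (C : Submodule F (Fin n → F)) (r : ℕ) : ℕ :=
  sInf {w | ∃ D : Submodule F (Fin n → F), D ≤ C ∧ Module.finrank F D = r ∧ wt D = w}

/-- `D` computes `d_r(C)`: `D ⊆ C`, `dim D = r` and `wt(D) = d_r(C)`. -/
def Computes {F : Type*} [Field F] {n : ℕ} (C : Submodule F (Fin n → F)) (r : ℕ)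
    (D : Submodule F (Fin n → F)) : Prop :=
  D ≤ C ∧ Module.finrank F D = r ∧ wt D = dC C r

end
noncomputable section

/-- `D` is a CEZ greedy `i`-subcode of `C`: for `i = 1` a `1`-dimensional subcode of minimal
weight; for `i ≥ 2` an `i`-dimensional subcode containing some subcode computing `d_{i-1}(C)`,
of minimal weight among all such. -/
def IsCEZ {F : Type*} [Field F] {n : ℕ} (C : Submodule F (Fin n → F)) (i : ℕ)
    (D : Submodule F (Fin n → F)) : Prop :=
  if i ≤ 1 then
    D ≤ C ∧ Module.finrank F D = 1 ∧
      ∀ D₂ ≤ C, Module.finrank F D₂ = 1 → wt D ≤ wt D₂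
  else
    D ≤ C ∧ Module.finrank F D = i ∧ (∃ D', Computes C (i - 1) D' ∧ D' ≤ D) ∧
      ∀ D₂ ≤ C, Module.finrank F D₂ = i →
        (∃ D'', Computes C (i - 1) D'' ∧ D'' ≤ D₂) → wt D ≤ wt D₂

/-!
Rank-nullity for `H` restricted to the words supported in `X` gives `n(X) = dim C(X)`, so the claim
is that `D = C(Supp D)`. Both kinds of subcode minimize the weight, in their dimension, among the
subcodes containing some `B` with `B = C(Supp B)`: take `B = 0`, respectively `B` computing
`d_{i-1}`. Suppose that `D ≠ C(Supp D)`. As `B < D`, there is `j ∈ Supp D \ Supp B`. Subtracting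
from a word in `C(Supp D) \ D` a multiple of a word of `D` that does not vanish at `j` yields
`v ∈ C(Supp D) \ D` with `v_j = 0`. Adjoining `v` to `{c ∈ D : c_j = 0}` then gives a subcode of
the dimension of `D` that contains `B` and has support in `Supp D \ {j}`, contradicting minimality.
-/

section LinearAlgebra

open Module

variable {K V W : Type*} [Field K] [AddCommGroup V] [Module K V] [AddCommGroup W] [Module K W]

lemma finrank_map_add_finrank_inf_ker (f : V →ₗ[K] W) (S : Submodule K V)
    [FiniteDimensional K S] :
    finrank K (S.map f) + finrank K (S ⊓ f.ker : Submodule K V) = finrank K S := by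
  rw [← LinearMap.finrank_range_add_finrank_ker (f.domRestrict S), LinearMap.range_domRestrict,
    LinearMap.ker_domRestrict, ← Submodule.finrank_map_subtype_eq S, Submodule.map_comap_subtype]

lemma finrank_inf_ker_add_one {f : V →ₗ[K] K} {S : Submodule K V} [FiniteDimensional K S]
    {c : V} (hc : c ∈ S) (hfc : f c ≠ 0) :
    finrank K (S ⊓ f.ker : Submodule K V) + 1 = finrank K S := by
  have hmap : S.map f = ⊤ :=
    (eq_bot_or_eq_top _).resolve_left fun hbot =>
      hfc ((Submodule.eq_bot_iff _).1 hbot _ (Submodule.mem_map_of_mem hc))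
  rw [← finrank_map_add_finrank_inf_ker f S, hmap, finrank_top, finrank_self, add_comm]

lemma exists_mem_inf_ker_notMem {f : V →ₗ[K] K} {S T : Submodule K V} (hST : S < T)
    {c : V} (hc : c ∈ S) (hfc : f c ≠ 0) : ∃ v ∈ T ⊓ f.ker, v ∉ S := by
  obtain ⟨w, hwT, hwS⟩ := SetLike.exists_of_lt hST
  have hmul : (f w / f c) • c ∈ S := S.smul_mem _ hc
  refine ⟨w - (f w / f c) • c, ⟨T.sub_mem hwT (hST.le hmul), ?_⟩,
    fun hv => hwS ((S.sub_mem_iff_left hmul).1 hv)⟩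
  simp [div_mul_cancel₀ _ hfc]

lemma exists_le_inf_ker_finrank_eq [FiniteDimensional K V] {f : V →ₗ[K] K}
    {S T : Submodule K V} (hST : S < T) {c : V} (hc : c ∈ S) (hfc : f c ≠ 0) :
    ∃ U ≤ T ⊓ f.ker, S ⊓ f.ker ≤ U ∧ finrank K U = finrank K S := by
  obtain ⟨v, hv, hvS⟩ := exists_mem_inf_ker_notMem hST hc hfc
  refine ⟨S ⊓ f.ker ⊔ Submodule.span K {v}, ?_, le_sup_left, ?_⟩
  · exact sup_le (inf_le_inf_right _ hST.le) ((Submodule.span_singleton_le_iff_mem _ _).2 hv)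
  · have hv_inf : v ∉ S ⊓ f.ker := fun h => hvS h.1
    rw [Submodule.finrank_sup_span_singleton hv_inf, finrank_inf_ker_add_one hc hfc]

end LinearAlgebra

section Nullity

variable {F : Type*} [Field F] {m n : ℕ} (H : Matrix (Fin m) (Fin n) F) (X : Finset (Fin n))

lemma map_mulVecLin_spanSubset :
    (Pi.spanSubset F (X : Set (Fin n))).map H.mulVecLin =
      Submodule.span F ((fun j i => H i j) '' (X : Set (Fin n))) := by
  have mulVec_basis (j : Fin n) : H.mulVecLin (Pi.basisFun F (Fin n) j) = fun i => H i j := by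
    ext i
    simp
  simp only [Pi.spanSubset, Submodule.map_span, Set.image_image, mulVec_basis]

lemma spanSubset_inf_ker_mulVecLin :
    Pi.spanSubset F (X : Set (Fin n)) ⊓ H.mulVecLin.ker = codeRestrict (codeOf H) X := by
  ext c
  rw [Submodule.mem_inf, Pi.mem_spanSubset_iff, and_comm]
  rfl

lemma nulC_eq_finrank_codeRestrict :
    nulC H X = Module.finrank F (codeRestrict (codeOf H) X) := by
  have rank_nullity :=
    finrank_map_add_finrank_inf_ker H.mulVecLin (Pi.spanSubset F (X : Set (Fin n)))
  rw [map_mulVecLin_spanSubset, spanSubset_inf_ker_mulVecLin, Pi.dim_spanSubset,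
    Set.ncard_coe_finset] at rank_nullity
  exact Nat.sub_eq_of_eq_add' rank_nullity.symm

end Nullity

section Support

variable {F : Type*} [Field F] {n : ℕ} {B C D : Submodule F (Fin n → F)}

lemma mem_suppD {j : Fin n} : j ∈ suppD D ↔ ∃ c ∈ D, c j ≠ 0 := by
  simp [suppD]

lemma notMem_suppD_iff_le_ker_proj {j : Fin n} :
    j ∉ suppD D ↔ D ≤ (LinearMap.proj j : (Fin n → F) →ₗ[F] F).ker := by
  simp [mem_suppD, SetLike.le_def]

lemma suppD_mono (hBD : B ≤ D) : suppD B ⊆ suppD D := fun _ hj => by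
  obtain ⟨c, hc, hcj⟩ := mem_suppD.1 hj
  exact mem_suppD.2 ⟨c, hBD hc, hcj⟩

lemma le_codeRestrict_iff {X : Finset (Fin n)} :
    D ≤ codeRestrict C X ↔ D ≤ C ∧ suppD D ⊆ X := by
  constructor
  · refine fun hD => ⟨fun c hc => (hD hc).1, fun j hj => ?_⟩
    obtain ⟨c, hc, hcj⟩ := mem_suppD.1 hj
    exact not_imp_comm.1 ((hD hc).2 j) hcj
  · exact fun ⟨hDC, hDX⟩ c hc =>
      ⟨hDC hc, fun j hj => not_not.1 fun hcj => hj (hDX (mem_suppD.2 ⟨c, hc, hcj⟩))⟩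

/-- The subcode `D` of `C` contains every word of `C` whose support lies in that of `D`, that is,
`D = C(Supp D)`. -/
def IsSupportClosed (C D : Submodule F (Fin n → F)) : Prop :=
  codeRestrict C (suppD D) = D

lemma isSupportClosed_bot : IsSupportClosed C ⊥ :=
  (Submodule.eq_bot_iff _).2 fun _ hc => funext fun j =>
    hc.2 j (notMem_suppD_iff_le_ker_proj.2 bot_le)

lemma IsSupportClosed.not_suppD_subset (hB : IsSupportClosed C B) (hBD : B < D) (hDC : D ≤ C) :
    ¬ suppD D ⊆ suppD B := fun hsub =>
  hBD.not_ge ((le_codeRestrict_iff.2 ⟨hDC, hsub⟩).trans_eq hB)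

lemma IsSupportClosed.nulC_suppD {m : ℕ} {H : Matrix (Fin m) (Fin n) F}
    (hD : IsSupportClosed (codeOf H) D) : nulC H (suppD D) = Module.finrank F D := by
  rw [nulC_eq_finrank_codeRestrict, hD]

end Support

section MinimalWeight

variable {F : Type*} [Field F] {n i : ℕ} {B C D : Submodule F (Fin n → F)}

lemma exists_finrank_eq_wt_lt {K : Submodule F (Fin n → F)} (hDK : D < K)
    (hsupp : suppD K ⊆ suppD D) (hBD : B ≤ D) (hne : ¬ suppD D ⊆ suppD B) :
    ∃ E ≤ K, Module.finrank F E = Module.finrank F D ∧ B ≤ E ∧ wt E < wt D := by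
  obtain ⟨j, hjD, hjB⟩ := Finset.not_subset.1 hne
  obtain ⟨c, hc, hcj⟩ := mem_suppD.1 hjD
  obtain ⟨E, hEK, hE, hdim⟩ :=
    exists_le_inf_ker_finrank_eq (f := LinearMap.proj j) hDK hc hcj
  obtain ⟨hEK, hEj⟩ := le_inf_iff.1 hEK
  refine ⟨E, hEK, hdim, (le_inf hBD (notMem_suppD_iff_le_ker_proj.1 hjB)).trans hE, ?_⟩
  have hjE : j ∉ suppD E := notMem_suppD_iff_le_ker_proj.2 hEj
  exact Finset.card_lt_card
    ((Finset.ssubset_iff_of_subset ((suppD_mono hEK).trans hsupp)).2 ⟨j, hjD, hjE⟩)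

/-- `D` is a subcode of `C` containing `B`, of minimal weight among the subcodes of `C` that contain
`B` and have the dimension of `D`. The base `B` is `⊥` for subcodes computing a generalized Hamming
weight, and a subcode computing `d_{i-1}(C)` for greedy `i`-subcodes. -/
structure IsMinWtAbove (C B D : Submodule F (Fin n → F)) : Prop where
  le : D ≤ C
  base_le : B ≤ D
  wt_le : ∀ E ≤ C, Module.finrank F E = Module.finrank F D → B ≤ E → wt D ≤ wt E

theorem IsMinWtAbove.isSupportClosed (hD : IsMinWtAbove C B D) (hB : IsSupportClosed C B)
    (hBD : B ≠ D) : IsSupportClosed C D := by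
  have hrestrict := le_codeRestrict_iff.1 (le_refl (codeRestrict C (suppD D)))
  have hle : D ≤ codeRestrict C (suppD D) := le_codeRestrict_iff.2 ⟨hD.le, subset_rfl⟩
  by_contra hne
  obtain ⟨E, hE, hdim, hBE, hwt⟩ :=
    exists_finrank_eq_wt_lt (lt_of_le_of_ne' hle hne) hrestrict.2 hD.base_le
      (hB.not_suppD_subset (lt_of_le_of_ne hD.base_le hBD) hD.le)
  exact hwt.not_ge (hD.wt_le E (hE.trans hrestrict.1) hdim hBE)

lemma Computes.isMinWtAbove_bot (hD : Computes C i D) : IsMinWtAbove C ⊥ D := by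
  obtain ⟨hDC, rfl, hwt⟩ := hD
  exact ⟨hDC, bot_le, fun E hEC hdim _ => hwt.trans_le (Nat.sInf_le ⟨E, hEC, hdim, rfl⟩)⟩

theorem Computes.isSupportClosed (hD : Computes C i D) : IsSupportClosed C D := by
  rcases eq_or_ne ⊥ D with rfl | hne
  · exact isSupportClosed_bot
  · exact hD.isMinWtAbove_bot.isSupportClosed isSupportClosed_bot hne

lemma IsCEZ.finrank_eq (hi : 1 ≤ i) (hD : IsCEZ C i D) : Module.finrank F D = i := by
  unfold IsCEZ at hD
  split_ifs at hD with hi1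
  · exact hD.2.1.trans (hi.antisymm hi1)
  · exact hD.2.1

lemma IsCEZ.exists_isMinWtAbove (hD : IsCEZ C i D) :
    ∃ B, IsSupportClosed C B ∧ B ≠ D ∧ IsMinWtAbove C B D := by
  unfold IsCEZ at hD
  split_ifs at hD with hi
  · obtain ⟨hDC, hdim, hmin⟩ := hD
    refine ⟨⊥, isSupportClosed_bot, ?_, hDC, bot_le, fun E hEC hE _ => hmin E hEC (hE.trans hdim)⟩
    rintro rfl
    simp at hdim
  · obtain ⟨hDC, hdim, ⟨B, hB, hBD⟩, hmin⟩ := hD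
    refine ⟨B, hB.isSupportClosed, ?_, hDC, hBD,
      fun E hEC hE hBE => hmin E hEC (hE.trans hdim) ⟨B, hB, hBE⟩⟩
    rintro rfl
    have := hB.2.1
    omega

theorem IsCEZ.isSupportClosed (hD : IsCEZ C i D) : IsSupportClosed C D :=
  let ⟨_, hB, hne, hmin⟩ := hD.exists_isMinWtAbove
  hmin.isSupportClosed hB hne

end MinimalWeight

theorem statement10_general {F : Type*} [Field F] {m n : ℕ} (H : Matrix (Fin m) (Fin n) F)
    {i : ℕ} (hi : 1 ≤ i) {D : Submodule F (Fin n → F)}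
    (hD : Computes (codeOf H) i D ∨ IsCEZ (codeOf H) i D) : nulC H (suppD D) = i := by
  rcases hD with hD | hD
  · exact hD.isSupportClosed.nulC_suppD.trans hD.2.1
  · exact hD.isSupportClosed.nulC_suppD.trans (hD.finrank_eq hi)

/-- if `D ⊆ C` computes `d_i(C)` or is a CEZ greedy `i`-subcode (`1 ≤ i ≤ k`),
then `n(Supp(D)) = i`, i.e. `Supp(D) ∈ 𝒩_i` for the matroid `M_C`. -/
theorem statement10 {F : Type*} [Field F] [Fintype F] {m k n : ℕ} (hmk : m + k = n)
    (H : Matrix (Fin m) (Fin n) F) (hH : H.rank = m)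
    (i : ℕ) (hi1 : 1 ≤ i) (hik : i ≤ k)
    (D : Submodule F (Fin n → F))
    (hD : Computes (codeOf H) i D ∨ IsCEZ (codeOf H) i D) :
    nulC H (suppD D) = i :=
  statement10_general H hi1 hD

end
end
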